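/- Let λ0 ∈ ℝ and let g be an exchangeable prior. Let d be a pseudo symmetric design with c_{d22} > 0 that is E_{g,λ0}-optimal for the proportional model. Then d is universally optimal under the traditional linear crossover model: for every real-valued function Φ on symmetric positive semidefinite t×t matrices that is concave, satisfies Φ(S′CS) = Φ(C) for every permutation matrix S, and is such that Φ(bC) is nondecreasing in the scalar b > 0, and for every design d′, every generalized inverse G′ of C_{d′22} (i.e., every t×t matrix G′ with C_{d′22} G′ C_{d′22} = C_{d′22}), and every generalized inverse G of C_{d22}, one has Φ(C_{d′11} − C_{d′12} G′ C_{d′21}) ≤ Φ(C_{d11} − C_{d12} G C_{d21}). -/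

import Mathlib

open Matrix MeasureTheory
open scoped Classical

noncomputable section

/-- A treatment sequence: assigns a treatment in `Fin t` to each period in `Fin p`. -/
abbrev TrtSeq (p t : ℕ) := Fin p → Fin t

/-- Treatment/period incidence matrix `T_s`. -/
def Tmat {p t : ℕ} (s : TrtSeq p t) : Matrix (Fin p) (Fin t) ℝ :=
  Matrix.of fun k i => if s k = i then 1 else 0

/-- Carryover incidence matrix `F_s`: first row zero, row `k` records the treatment
in period `k-1`. -/
def Fmat {p t : ℕ} (s : TrtSeq p t) : Matrix (Fin p) (Fin t) ℝ :=
  Matrix.of fun k i =>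
    if (k : ℕ) = 0 then 0
    else if s ⟨(k : ℕ) - 1, Nat.lt_of_le_of_lt (Nat.sub_le _ _) k.isLt⟩ = i then 1 else 0

/-- The all-ones `m × m` matrix `J_m`. -/
def Jmat (m : ℕ) : Matrix (Fin m) (Fin m) ℝ := Matrix.of fun _ _ => 1

/-- `B_t = I_t - J_t / t`. -/
def Bmat (t : ℕ) : Matrix (Fin t) (Fin t) ℝ := 1 - ((t : ℝ))⁻¹ • Jmat t

/-- `B̃ = Σ⁻¹ - Σ⁻¹ J_p Σ⁻¹ / (1_p' Σ⁻¹ 1_p)`. -/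
def Btil {p : ℕ} (S : Matrix (Fin p) (Fin p) ℝ) : Matrix (Fin p) (Fin p) ℝ :=
  S⁻¹ - (((fun _ => (1 : ℝ)) : Fin p → ℝ) ⬝ᵥ (S⁻¹ *ᵥ fun _ => (1 : ℝ)))⁻¹ •
    (S⁻¹ * Jmat p * S⁻¹)

/-- `G_1(s) = T_s`, `G_2(s) = F_s`. -/
def Gmat {p t : ℕ} (i : Fin 2) (s : TrtSeq p t) : Matrix (Fin p) (Fin t) ℝ :=
  if i = 0 then Tmat s else Fmat s

/-- An approximate design: nonnegative weights summing to one. -/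
def IsDesign {p t : ℕ} (w : TrtSeq p t → ℝ) : Prop :=
  (∀ s, 0 ≤ w s) ∧ ∑ s : TrtSeq p t, w s = 1

/-- `Ĉ_{sij} = B_t G_i(s)' B̃ G_j(s) B_t`. -/
def Chat {p t : ℕ} (S : Matrix (Fin p) (Fin p) ℝ) (s : TrtSeq p t) (i j : Fin 2) :
    Matrix (Fin t) (Fin t) ℝ :=
  Bmat t * (Gmat i s)ᵀ * Btil S * Gmat j s * Bmat t

/-- `c_{sij} = tr Ĉ_{sij}`. -/
def cseq {p t : ℕ} (S : Matrix (Fin p) (Fin p) ℝ) (s : TrtSeq p t) (i j : Fin 2) : ℝ :=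
  (Chat S s i j).trace

/-- `Ĉ_{dij} = n ∑_s p_s Ĉ_{sij}`. -/
def ChatD {p t : ℕ} (n : ℕ) (S : Matrix (Fin p) (Fin p) ℝ) (w : TrtSeq p t → ℝ)
    (i j : Fin 2) : Matrix (Fin t) (Fin t) ℝ :=
  (n : ℝ) • ∑ s : TrtSeq p t, w s • Chat S s i j

/-- `C_{dij} = Ĉ_{dij} - n (∑_s p_s G_i(s) B_t)' B̃ (∑_s p_s G_j(s) B_t)`. -/
def CD {p t : ℕ} (n : ℕ) (S : Matrix (Fin p) (Fin p) ℝ) (w : TrtSeq p t → ℝ)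
    (i j : Fin 2) : Matrix (Fin t) (Fin t) ℝ :=
  ChatD n S w i j -
    (n : ℝ) • ((∑ s : TrtSeq p t, w s • (Gmat i s * Bmat t))ᵀ * Btil S *
      (∑ s : TrtSeq p t, w s • (Gmat j s * Bmat t)))

/-- `c_{dij} = tr Ĉ_{dij} = n ∑_s p_s c_{sij}`. -/
def cD {p t : ℕ} (n : ℕ) (S : Matrix (Fin p) (Fin p) ℝ) (w : TrtSeq p t → ℝ)
    (i j : Fin 2) : ℝ :=
  (ChatD n S w i j).trace

/-- Fisher information matrix `C_{d,τ0,λ0}` for the direct treatment effects under the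
proportional model. -/
def CInfo {p t : ℕ} (n : ℕ) (S : Matrix (Fin p) (Fin p) ℝ) (w : TrtSeq p t → ℝ)
    (τ0 : Fin t → ℝ) (l0 : ℝ) : Matrix (Fin t) (Fin t) ℝ :=
  CD n S w 0 0 + l0 • (CD n S w 0 1 + CD n S w 1 0) + (l0 ^ 2) • CD n S w 1 1 -
    (τ0 ⬝ᵥ (CD n S w 1 1 *ᵥ τ0))⁻¹ •
      ((CD n S w 0 1 + l0 • CD n S w 1 1) * vecMulVec τ0 τ0 *
        (CD n S w 1 0 + l0 • CD n S w 1 1))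

/-- Permutation matrix `S_σ` with `(S_σ)_{j,i} = 1` iff `i = σ j`. -/
def Smat {t : ℕ} (σ : Equiv.Perm (Fin t)) : Matrix (Fin t) (Fin t) ℝ :=
  Matrix.of fun j i => if i = σ j then 1 else 0

/-- The relabelled sequence `σ ∘ s`. -/
def permSeq {p t : ℕ} (σ : Equiv.Perm (Fin t)) (s : TrtSeq p t) : TrtSeq p t := fun k => σ (s k)

/-- The design `σ d`, with weights `(σd)_s = p_{σ⁻¹ ∘ s}`. -/
def permDesign {p t : ℕ} (σ : Equiv.Perm (Fin t)) (w : TrtSeq p t → ℝ) : TrtSeq p t → ℝ :=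
  fun s => w (permSeq σ⁻¹ s)

/-- A design is symmetric if its weights are invariant under treatment relabelling. -/
def IsSymmetricDesign {p t : ℕ} (w : TrtSeq p t → ℝ) : Prop :=
  ∀ (σ : Equiv.Perm (Fin t)) (s : TrtSeq p t), w (permSeq σ s) = w s

/-- The symmetrized design `d*` with weights `p*_s = (1/t!) ∑_σ p_{σ⁻¹ ∘ s}`. -/
def symmetrize {p t : ℕ} (w : TrtSeq p t → ℝ) : TrtSeq p t → ℝ :=
  fun s => ((Nat.factorial t : ℝ))⁻¹ * ∑ σ : Equiv.Perm (Fin t), permDesign σ w s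

/-- `q_s(x) = c_{s11} + 2 c_{s12} x + c_{s22} x²`. -/
def qSeq {p t : ℕ} (S : Matrix (Fin p) (Fin p) ℝ) (s : TrtSeq p t) (x : ℝ) : ℝ :=
  cseq S s 0 0 + 2 * cseq S s 0 1 * x + cseq S s 1 1 * x ^ 2

/-- `q(x) = max_{s ∈ S} q_s(x)`. -/
def qMax (p t : ℕ) (S : Matrix (Fin p) (Fin p) ℝ) (x : ℝ) : ℝ :=
  sSup (Set.range fun s : TrtSeq p t => qSeq S s x)

/-- `y* = inf_x q(x)`. -/
def yStar (p t : ℕ) (S : Matrix (Fin p) (Fin p) ℝ) : ℝ := ⨅ x : ℝ, qMax p t S x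

/-- `q_d(x) = ∑_s p_s q_s(x)`. -/
def qD {p t : ℕ} (S : Matrix (Fin p) (Fin p) ℝ) (w : TrtSeq p t → ℝ) (x : ℝ) : ℝ :=
  ∑ s : TrtSeq p t, w s * qSeq S s x

/-- `x_d = -c_{d12}/c_{d22}`. -/
def xD {p t : ℕ} (n : ℕ) (S : Matrix (Fin p) (Fin p) ℝ) (w : TrtSeq p t → ℝ) : ℝ :=
  -(cD n S w 0 1) / cD n S w 1 1

/-- An exchangeable prior: a probability measure on `{τ : 1'τ = 0, τ ≠ 0}` that is
invariant under all coordinate permutations of `ℝ^t`. -/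
def IsExchangeablePrior {t : ℕ} (g : Measure (Fin t → ℝ)) : Prop :=
  IsProbabilityMeasure g ∧
    g {τ : Fin t → ℝ | ¬((∑ i, τ i) = 0 ∧ τ ≠ 0)} = 0 ∧
    ∀ σ : Equiv.Perm (Fin t), Measure.map (fun τ i => τ (σ i)) g = g

/-- `m_d(τ0) = min {ℓ' C_{d,τ0,λ0} ℓ : 1'ℓ = 0, ℓ'ℓ = 1}`. -/
def mD {p t : ℕ} (n : ℕ) (S : Matrix (Fin p) (Fin p) ℝ) (w : TrtSeq p t → ℝ) (l0 : ℝ)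
    (τ0 : Fin t → ℝ) : ℝ :=
  sInf {v : ℝ | ∃ l : Fin t → ℝ, (∑ i, l i) = 0 ∧ l ⬝ᵥ l = 1 ∧
    v = l ⬝ᵥ (CInfo n S w τ0 l0 *ᵥ l)}

/-- The E-criterion value `E_{g,λ0}(d) = ∫ m_d(τ0) g(dτ0)`. -/
def Ecrit {p t : ℕ} (n : ℕ) (S : Matrix (Fin p) (Fin p) ℝ) (g : Measure (Fin t → ℝ))
    (l0 : ℝ) (w : TrtSeq p t → ℝ) : ℝ :=
  ∫ τ0, mD n S w l0 τ0 ∂g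

/-- Competing designs for E-optimality: designs with a.e. positive `τ0' C_{d22} τ0`
and `g`-integrable `m_d`. -/
def EAdmissible {p t : ℕ} (n : ℕ) (S : Matrix (Fin p) (Fin p) ℝ) (g : Measure (Fin t → ℝ))
    (l0 : ℝ) (w : TrtSeq p t → ℝ) : Prop :=
  IsDesign w ∧ (∀ᵐ τ0 ∂g, 0 < τ0 ⬝ᵥ (CD n S w 1 1 *ᵥ τ0)) ∧
    Integrable (mD n S w l0) g

/-- `d` is `E_{g,λ0}`-optimal. -/
def EOptimal {p t : ℕ} (n : ℕ) (S : Matrix (Fin p) (Fin p) ℝ) (g : Measure (Fin t → ℝ))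
    (l0 : ℝ) (w : TrtSeq p t → ℝ) : Prop :=
  ∀ w' : TrtSeq p t → ℝ, EAdmissible n S g l0 w' → Ecrit n S g l0 w' ≤ Ecrit n S g l0 w

/-- A pseudo symmetric design: treatments equireplicated in each period,
and all `C_{dij}` completely symmetric. -/
def IsPseudoSymmetric {p t : ℕ} (n : ℕ) (S : Matrix (Fin p) (Fin p) ℝ)
    (w : TrtSeq p t → ℝ) : Prop :=
  (∀ (k : Fin p) (i : Fin t),
    (∑ s ∈ Finset.univ.filter fun s : TrtSeq p t => s k = i, w s) = 1 / (t : ℝ)) ∧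
  ∀ i j : Fin 2, ∃ a b : ℝ, CD n S w i j = a • (1 : Matrix (Fin t) (Fin t) ℝ) + b • Jmat t

/-- Eigenvalues of a (Hermitian) matrix sorted increasingly with multiplicity. -/
def sortedEigs {t : ℕ} (C : Matrix (Fin t) (Fin t) ℝ) : Fin t → ℝ :=
  if h : C.IsHermitian then (fun i => h.eigenvalues (Tuple.sort h.eigenvalues i))
  else fun _ => 0

/-- `Φ_D(C) = (∏_{i=1}^{t-1} a_i)^{1/(t-1)}` (eigenvalues sorted increasingly). -/
def PhiD {t : ℕ} (C : Matrix (Fin t) (Fin t) ℝ) : ℝ :=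
  (∏ i ∈ Finset.univ.filter fun i : Fin t => (i : ℕ) ≠ 0, sortedEigs C i) ^ (((t : ℝ) - 1)⁻¹)

/-- `Φ_A(C) = (t-1)(∑_{i=1}^{t-1} a_i⁻¹)⁻¹` if `a_1 > 0`, else `0`. -/
def PhiA {t : ℕ} (C : Matrix (Fin t) (Fin t) ℝ) : ℝ :=
  if ∀ i : Fin t, (i : ℕ) ≠ 0 → 0 < sortedEigs C i then
    ((t : ℝ) - 1) *
      (∑ i ∈ Finset.univ.filter fun i : Fin t => (i : ℕ) ≠ 0, (sortedEigs C i)⁻¹)⁻¹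
  else 0

/-- `Φ_T(C) = tr(C)/(t-1)`. -/
def PhiT {t : ℕ} (C : Matrix (Fin t) (Fin t) ℝ) : ℝ := C.trace / ((t : ℝ) - 1)

/-- The criterion value `∫ Φ(C_{d,τ0,λ0}) g(dτ0)`. -/
def PhiCrit {p t : ℕ} (n : ℕ) (S : Matrix (Fin p) (Fin p) ℝ)
    (Phi : Matrix (Fin t) (Fin t) ℝ → ℝ) (g : Measure (Fin t → ℝ)) (l0 : ℝ)
    (w : TrtSeq p t → ℝ) : ℝ :=
  ∫ τ0, Phi (CInfo n S w τ0 l0) ∂g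

/-- Competing designs for a `Φ`-criterion. -/
def PhiAdmissible {p t : ℕ} (n : ℕ) (S : Matrix (Fin p) (Fin p) ℝ)
    (Phi : Matrix (Fin t) (Fin t) ℝ → ℝ) (g : Measure (Fin t → ℝ)) (l0 : ℝ)
    (w : TrtSeq p t → ℝ) : Prop :=
  IsDesign w ∧ (∀ᵐ τ0 ∂g, 0 < τ0 ⬝ᵥ (CD n S w 1 1 *ᵥ τ0)) ∧
    Integrable (fun τ0 => Phi (CInfo n S w τ0 l0)) g

/-- `d` is `Φ_{g,λ0}`-optimal. -/
def PhiOptimal {p t : ℕ} (n : ℕ) (S : Matrix (Fin p) (Fin p) ℝ)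
    (Phi : Matrix (Fin t) (Fin t) ℝ → ℝ) (g : Measure (Fin t → ℝ)) (l0 : ℝ)
    (w : TrtSeq p t → ℝ) : Prop :=
  ∀ w' : TrtSeq p t → ℝ, PhiAdmissible n S Phi g l0 w' →
    PhiCrit n S Phi g l0 w' ≤ PhiCrit n S Phi g l0 w

/-- `H_1(s) = F_s`, `H_2(s) = T_s + λ0 F_s` (for estimating `λ`). -/
def Hmat {p t : ℕ} (l0 : ℝ) (i : Fin 2) (s : TrtSeq p t) : Matrix (Fin p) (Fin t) ℝ :=
  if i = 0 then Fmat s else Tmat s + l0 • Fmat s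

/-- `Â_{sij} = B_t H_i(s)' B̃ H_j(s) B_t`. -/
def Ahat {p t : ℕ} (S : Matrix (Fin p) (Fin p) ℝ) (l0 : ℝ) (s : TrtSeq p t) (i j : Fin 2) :
    Matrix (Fin t) (Fin t) ℝ :=
  Bmat t * (Hmat l0 i s)ᵀ * Btil S * Hmat l0 j s * Bmat t

/-- `h_{sij} = tr Â_{sij}`. -/
def hseq {p t : ℕ} (S : Matrix (Fin p) (Fin p) ℝ) (l0 : ℝ) (s : TrtSeq p t) (i j : Fin 2) : ℝ :=
  (Ahat S l0 s i j).trace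

/-- `Â_{dij} = n ∑_s p_s Â_{sij}`. -/
def AhatD {p t : ℕ} (n : ℕ) (S : Matrix (Fin p) (Fin p) ℝ) (l0 : ℝ) (w : TrtSeq p t → ℝ)
    (i j : Fin 2) : Matrix (Fin t) (Fin t) ℝ :=
  (n : ℝ) • ∑ s : TrtSeq p t, w s • Ahat S l0 s i j

/-- `A_{dij} = Â_{dij} - n (∑_s p_s H_i(s) B_t)' B̃ (∑_s p_s H_j(s) B_t)`. -/
def AD {p t : ℕ} (n : ℕ) (S : Matrix (Fin p) (Fin p) ℝ) (l0 : ℝ) (w : TrtSeq p t → ℝ)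
    (i j : Fin 2) : Matrix (Fin t) (Fin t) ℝ :=
  AhatD n S l0 w i j -
    (n : ℝ) • ((∑ s : TrtSeq p t, w s • (Hmat l0 i s * Bmat t))ᵀ * Btil S *
      (∑ s : TrtSeq p t, w s • (Hmat l0 j s * Bmat t)))

/-- `G` is a generalized inverse of `A`. -/
def IsGInv {t : ℕ} (A G : Matrix (Fin t) (Fin t) ℝ) : Prop := A * G * A = A

/-- `A_d(G) = A_{d11} - A_{d12} G A_{d21}` with `A_{d21} = A_{d12}'`. -/
def ADfun {p t : ℕ} (n : ℕ) (S : Matrix (Fin p) (Fin p) ℝ) (l0 : ℝ) (w : TrtSeq p t → ℝ)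
    (G : Matrix (Fin t) (Fin t) ℝ) : Matrix (Fin t) (Fin t) ℝ :=
  AD n S l0 w 0 0 - AD n S l0 w 0 1 * G * (AD n S l0 w 0 1)ᵀ

/-- `r_s(x) = h_{s11} + 2 h_{s12} x + h_{s22} x²`. -/
def rSeq {p t : ℕ} (S : Matrix (Fin p) (Fin p) ℝ) (l0 : ℝ) (s : TrtSeq p t) (x : ℝ) : ℝ :=
  hseq S l0 s 0 0 + 2 * hseq S l0 s 0 1 * x + hseq S l0 s 1 1 * x ^ 2

/-- `r(x) = max_s r_s(x)`. -/
def rMax (p t : ℕ) (S : Matrix (Fin p) (Fin p) ℝ) (l0 : ℝ) (x : ℝ) : ℝ :=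
  sSup (Set.range fun s : TrtSeq p t => rSeq S l0 s x)

/-- `y_0 = inf_x r(x)`. -/
def yZero (p t : ℕ) (S : Matrix (Fin p) (Fin p) ℝ) (l0 : ℝ) : ℝ := ⨅ x : ℝ, rMax p t S l0 x

/-!
A pseudo symmetric design `d` has mean matrices killed by `B_t`, so each `C_{dij}` equals
`c_{dij} / (t - 1)` times `B_t`. Write `n q_d(x) = c_{d11} + 2 c_{d12} x + c_{d22} x²`, with minimum
at `x_d = -c_{d12} / c_{d22}`. Minimising `ℓ' C_{d,τ0,λ0} ℓ` over unit contrasts `ℓ` gives the value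
at `ℓ ∥ τ0`, which is `n q_d(x_d) / (t - 1)` whatever `τ0` and `λ0` are; and the traditional
information matrix of `d` is this same constant times `B_t`. Hence an E-optimal pseudo symmetric `d`
maximises `n q_u(x_u)` over all pseudo symmetric `u`.

For an arbitrary design `d'`, let `u` be the symmetrization of `(d + d') / 2`, so that
`q_u = (q_d + q_{d'}) / 2`. At `x = x_u`,
`n q_d(x) + n q_{d'}(x) = 2 n q_u(x_u) ≤ 2 n q_d(x_d) ≤ n q_d(x) + n q_d(x_d)`,
so `n q_{d'}(x) ≤ n q_d(x_d)`. Since the `C_{d'ij}` are the blocks `M_i' M_j` of a Gram matrix,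
Pythagoras bounds the trace of the traditional information matrix of `d'` by
`tr (M_1 + x M_2)' (M_1 + x M_2) ≤ n q_{d'}(x)`. Averaging that matrix over all relabellings gives a
multiple of `B_t` with the same trace, which does not decrease a concave invariant criterion.
-/

section LinearAlgebra

variable {ι σ m n k : Type*}

theorem transpose_eq_self_of_posSemidef {P : Matrix m m ℝ} (hP : P.PosSemidef) : Pᵀ = P := by
  rw [← conjTranspose_eq_transpose_of_trivial, hP.isHermitian.eq]

variable [Fintype σ] [Fintype m]

open scoped MatrixOrder in
theorem exists_eq_transpose_mul_self_of_posSemidef {P : Matrix m m ℝ} (hP : P.PosSemidef) :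
    ∃ R : Matrix m m ℝ, P = Rᵀ * R := by
  obtain ⟨R, hR⟩ := CStarAlgebra.nonneg_iff_eq_star_mul_self.mp hP.nonneg
  exact ⟨R, by rw [hR, star_eq_conjTranspose, conjTranspose_eq_transpose_of_trivial]⟩

theorem posSemidef_transpose_mul_mul_same [Finite n] {P : Matrix m m ℝ} (hP : P.PosSemidef)
    (X : Matrix m n ℝ) : (Xᵀ * P * X).PosSemidef := by
  have := Fintype.ofFinite n
  simpa only [conjTranspose_eq_transpose_of_trivial] using hP.conjTranspose_mul_mul_same X

theorem trace_transpose_mul_mul_add_smul [Fintype n] {P : Matrix m m ℝ} (hP : Pᵀ = P)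
    (X Y : Matrix m n ℝ) (x : ℝ) :
    ((X + x • Y)ᵀ * P * (X + x • Y)).trace =
      (Xᵀ * P * X).trace + 2 * (Xᵀ * P * Y).trace * x + (Yᵀ * P * Y).trace * x ^ 2 := by
  have hYX : (Yᵀ * P * X).trace = (Xᵀ * P * Y).trace := by
    rw [← trace_transpose, transpose_mul, transpose_mul, transpose_transpose, hP, Matrix.mul_assoc]
  simp only [transpose_add, transpose_smul, Matrix.add_mul, Matrix.mul_add, Matrix.smul_mul,
    Matrix.mul_smul, trace_add, trace_smul, smul_eq_mul, hYX]
  ring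

-- With `c = v' P v`, the matrix is `K' P K` for `K = 1 - c⁻¹ v v' P`, whether or not `c = 0`.
theorem posSemidef_sub_inv_smul_vecMulVec_mulVec {P : Matrix m m ℝ} (hP : P.PosSemidef)
    (v : m → ℝ) :
    (P - (v ⬝ᵥ (P *ᵥ v))⁻¹ • vecMulVec (P *ᵥ v) (P *ᵥ v)).PosSemidef := by
  set c := v ⬝ᵥ (P *ᵥ v) with hc
  set q := P *ᵥ v with hq
  have hvP : v ᵥ* P = q := by
    rw [← mulVec_transpose, transpose_eq_self_of_posSemidef hP]
  have hKP : (1 - c⁻¹ • vecMulVec v q)ᵀ * P = P - c⁻¹ • vecMulVec q q := by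
    simp only [transpose_sub, transpose_one, transpose_smul, transpose_vecMulVec, Matrix.sub_mul,
      Matrix.one_mul, Matrix.smul_mul, vecMulVec_mul, hvP]
  have hcc : c⁻¹ * c⁻¹ * c = c⁻¹ := by simpa using mul_self_mul_inv c⁻¹
  have hqq : (c⁻¹ • vecMulVec q q) * (c⁻¹ • vecMulVec v q) = c⁻¹ • vecMulVec q q := by
    rw [Matrix.smul_mul, Matrix.mul_smul, vecMulVec_mul_vecMulVec, dotProduct_comm, ← hc,
      vecMulVec_smul, smul_smul, smul_smul, hcc]
  convert posSemidef_transpose_mul_mul_same hP (1 - c⁻¹ • vecMulVec v q) using 1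
  rw [hKP, Matrix.mul_sub, Matrix.mul_one, Matrix.sub_mul, hqq, Matrix.mul_smul, mul_vecMulVec,
    ← hq]
  abel

theorem sum_smul_transpose_mul_mul_sub_mean (P : Matrix m m ℝ) {c : σ → ℝ} (hc : ∑ s, c s = 1)
    (X Y : σ → Matrix m n ℝ) :
    ∑ s, c s • ((X s - ∑ r, c r • X r)ᵀ * P * (Y s - ∑ r, c r • Y r)) =
      ∑ s, c s • ((X s)ᵀ * P * Y s) - (∑ s, c s • X s)ᵀ * P * ∑ s, c s • Y s := by
  set μ := ∑ r, c r • X r with hμ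
  set ν := ∑ r, c r • Y r with hν
  have expand : ∀ s, c s • ((X s - μ)ᵀ * P * (Y s - ν)) =
      c s • ((X s)ᵀ * P * Y s) - μᵀ * P * (c s • Y s) - (c s • X s)ᵀ * P * ν +
        c s • (μᵀ * P * ν) := by
    intro s
    simp only [transpose_sub, transpose_smul, Matrix.sub_mul, Matrix.mul_sub, smul_sub,
      Matrix.mul_smul, Matrix.smul_mul]
    abel
  simp only [expand, Finset.sum_add_distrib, Finset.sum_sub_distrib, ← Finset.sum_smul, hc,
    one_smul, ← Matrix.mul_sum, ← Matrix.sum_mul, ← transpose_sum, ← hμ, ← hν]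
  abel

theorem exists_gram_of_posSemidef {P : Matrix m m ℝ} (hP : P.PosSemidef) {c : σ → ℝ}
    (hc : ∀ s, 0 ≤ c s) (X : ι → σ → Matrix m n ℝ) :
    ∃ M : ι → Matrix (σ × m) n ℝ,
      ∀ i j, ∑ s, c s • ((X i s)ᵀ * P * X j s) = (M i)ᵀ * M j := by
  obtain ⟨R, rfl⟩ := exists_eq_transpose_mul_self_of_posSemidef hP
  refine ⟨fun i => of fun q b => √(c q.1) * (R * X i q.1) q.2 b, fun i j => ?_⟩
  ext a b
  have hR : ∀ s, (X i s)ᵀ * (Rᵀ * R) * X j s = (R * X i s)ᵀ * (R * X j s) := fun s => by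
    simp only [transpose_mul, Matrix.mul_assoc]
  simp only [hR, Matrix.sum_apply, Matrix.smul_apply, smul_eq_mul]
  rw [Matrix.mul_apply, Fintype.sum_prod_type]
  refine Finset.sum_congr rfl fun s _ => ?_
  rw [Matrix.mul_apply, Finset.mul_sum]
  refine Finset.sum_congr rfl fun r _ => ?_
  simp only [transpose_apply, of_apply]
  rw [mul_mul_mul_comm, Real.mul_self_sqrt (hc s)]

section GeneralizedInverse

variable [Fintype k] {A : Matrix m n ℝ} {B : Matrix m k ℝ} {G : Matrix k k ℝ}

theorem transpose_mul_self_mul_ginv_mul_transpose (hG : Bᵀ * B * G * (Bᵀ * B) = Bᵀ * B) :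
    Bᵀ * B * G * Bᵀ = Bᵀ := by
  have h : (Bᵀ * B * G - 1) * (Bᴴ * B) = 0 := by
    rw [conjTranspose_eq_transpose_of_trivial, Matrix.sub_mul, hG, Matrix.one_mul, sub_self]
  rw [mul_conjTranspose_mul_self_eq_zero, conjTranspose_eq_transpose_of_trivial,
    Matrix.sub_mul, Matrix.one_mul] at h
  exact sub_eq_zero.mp h

-- Pythagoras: `A + B X` splits into the residual of `A` off the range of `B` and a part in it.
theorem transpose_mul_self_add_mul_eq_residual_add
    (hG : Bᵀ * B * G * (Bᵀ * B) = Bᵀ * B) (X : Matrix k n ℝ) :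
    (A + B * X)ᵀ * (A + B * X) = (Aᵀ * A - Aᵀ * B * G * (Bᵀ * A)) +
      (B * (X + G * (Bᵀ * A)))ᵀ * (B * (X + G * (Bᵀ * A))) := by
  set Z := G * (Bᵀ * A) with hZ
  have hBZ : Bᵀ * B * Z = Bᵀ * A := by
    rw [hZ, ← Matrix.mul_assoc, ← Matrix.mul_assoc, transpose_mul_self_mul_ginv_mul_transpose hG]
  have hZB : Zᵀ * (Bᵀ * B) = Aᵀ * B := by
    simpa only [transpose_mul, transpose_transpose] using congrArg transpose hBZ
  have expand : (B * (X + Z))ᵀ * (B * (X + Z)) =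
      Xᵀ * (Bᵀ * B) * X + Xᵀ * (Bᵀ * B * Z) + Zᵀ * (Bᵀ * B) * X + Zᵀ * (Bᵀ * B) * Z := by
    simp only [transpose_mul, transpose_add, Matrix.add_mul, Matrix.mul_add, Matrix.mul_assoc]
    abel
  rw [expand, hBZ, hZB, Matrix.mul_assoc (Aᵀ * B), ← hZ]
  simp only [transpose_mul, transpose_add, Matrix.add_mul, Matrix.mul_add, Matrix.mul_assoc]
  abel

theorem posSemidef_ginv_residual [Finite n] (hG : Bᵀ * B * G * (Bᵀ * B) = Bᵀ * B) :
    (Aᵀ * A - Aᵀ * B * G * (Bᵀ * A)).PosSemidef := by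
  have := Fintype.ofFinite n
  have h := transpose_mul_self_add_mul_eq_residual_add (A := A) hG (-(G * (Bᵀ * A)))
  rw [neg_add_cancel, Matrix.mul_zero, Matrix.mul_zero, add_zero] at h
  rw [← h, ← conjTranspose_eq_transpose_of_trivial]
  exact posSemidef_conjTranspose_mul_self _

theorem trace_ginv_residual_le [Fintype n] (hG : Bᵀ * B * G * (Bᵀ * B) = Bᵀ * B)
    (X : Matrix k n ℝ) :
    (Aᵀ * A - Aᵀ * B * G * (Bᵀ * A)).trace ≤ ((A + B * X)ᵀ * (A + B * X)).trace := by
  rw [transpose_mul_self_add_mul_eq_residual_add hG X, trace_add, le_add_iff_nonneg_right,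
    ← conjTranspose_eq_transpose_of_trivial]
  exact (posSemidef_conjTranspose_mul_self _).trace_nonneg

theorem trace_ginv_residual_le_quadratic {A B : Matrix m k ℝ}
    (hG : Bᵀ * B * G * (Bᵀ * B) = Bᵀ * B) (x : ℝ) :
    (Aᵀ * A - Aᵀ * B * G * (Bᵀ * A)).trace ≤
      (Aᵀ * A).trace + 2 * (Aᵀ * B).trace * x + (Bᵀ * B).trace * x ^ 2 := by
  have h := trace_ginv_residual_le (A := A) hG (x • 1)
  have expand := trace_transpose_mul_mul_add_smul transpose_one A B x
  simp only [Matrix.mul_one] at expand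
  rwa [Matrix.mul_smul, Matrix.mul_one, expand] at h

end GeneralizedInverse

end LinearAlgebra

section CompleteSymmetry

theorem exists_eq_smul_one_add_of_submatrix_eq {ι R : Type*} [DecidableEq ι] [Ring R]
    {M : Matrix ι ι R}
    (hM : ∀ σ : Equiv.Perm ι, M.submatrix σ σ = M) :
    ∃ a b : R, M = a • 1 + b • of fun _ _ => 1 := by
  have hσ : ∀ (σ : Equiv.Perm ι) i j, M (σ i) (σ j) = M i j := fun σ i j =>
    congrFun (congrFun (hM σ) i) j
  obtain ⟨a, ha⟩ : ∃ a, ∀ i, M i i = a := by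
    refine isEmpty_or_nonempty ι |>.elim (fun _ => ⟨0, isEmptyElim⟩) fun ⟨k⟩ => ⟨M k k, fun i => ?_⟩
    simpa only [Equiv.swap_apply_right] using hσ (Equiv.swap i k) k k
  obtain ⟨b, hb⟩ : ∃ b, ∀ i j, i ≠ j → M i j = b := by
    by_cases h : ∃ k l : ι, k ≠ l
    · obtain ⟨k, l, hkl⟩ := h
      refine ⟨M k l, fun i j hij => ?_⟩
      obtain ⟨σ, rfl, rfl⟩ := MulAction.is_two_pretransitive_iff.mp
        (Equiv.Perm.isMultiplyPretransitive ι 2) hkl hij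
      exact hσ σ k l
    · exact ⟨0, fun i j hij => absurd ⟨i, j, hij⟩ h⟩
  refine ⟨a - b, b, ?_⟩
  ext i j
  rcases eq_or_ne i j with rfl | hij
  · simp [ha]
  · simp [hb i j hij, hij]

theorem Bmat_posSemidef (t : ℕ) : (Bmat t).PosSemidef := by
  convert posSemidef_sub_inv_smul_vecMulVec_mulVec
    (PosSemidef.one : (1 : Matrix (Fin t) (Fin t) ℝ).PosSemidef) 1 using 1
  ext i j
  simp [Bmat, Jmat]

theorem Bmat_transpose (t : ℕ) : (Bmat t)ᵀ = Bmat t :=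
  transpose_eq_self_of_posSemidef (Bmat_posSemidef t)

theorem Jmat_mulVec {t : ℕ} (v : Fin t → ℝ) : Jmat t *ᵥ v = fun _ => ∑ i, v i := by
  ext i
  simp [Jmat, mulVec, dotProduct]

theorem Bmat_mulVec {t : ℕ} (v : Fin t → ℝ) :
    Bmat t *ᵥ v = v - (t : ℝ)⁻¹ • fun _ => ∑ i, v i := by
  rw [Bmat, sub_mulVec, one_mulVec, smul_mulVec, Jmat_mulVec]

theorem Bmat_mulVec_of_sum_eq_zero {t : ℕ} {v : Fin t → ℝ} (hv : ∑ i, v i = 0) :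
    Bmat t *ᵥ v = v := by
  ext i
  simp [Bmat_mulVec, hv]

theorem Bmat_mulVec_one (t : ℕ) : Bmat t *ᵥ 1 = 0 := by
  ext i
  have : (t : ℝ) ≠ 0 := by exact_mod_cast (i.pos).ne'
  simp [Bmat_mulVec, this]

theorem Bmat_eq_zero_of_le_one {t : ℕ} (ht : t ≤ 1) : Bmat t = 0 := by
  have : Subsingleton (Fin t) := Fin.subsingleton_iff_le_one.mpr ht
  ext i j
  have h := congrFun (Bmat_mulVec_one t) i
  simp only [mulVec, dotProduct, Pi.one_apply, mul_one, Pi.zero_apply,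
    Fintype.sum_subsingleton _ j] at h
  exact h

theorem Bmat_submatrix {t : ℕ} (σ : Equiv.Perm (Fin t)) : (Bmat t).submatrix σ σ = Bmat t := by
  ext i j
  simp [Bmat, Jmat, one_apply]

theorem eq_smul_Bmat_of_mulVec_one_eq_zero {t : ℕ} (ht : 1 < t) {M : Matrix (Fin t) (Fin t) ℝ}
    (hM : ∃ a b : ℝ, M = a • 1 + b • Jmat t) (h1 : M *ᵥ 1 = 0) :
    M = (M.trace / (t - 1)) • Bmat t := by
  obtain ⟨a, b, rfl⟩ := hM
  have ht0 : (t : ℝ) ≠ 0 := by positivity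
  have ht1 : (t : ℝ) - 1 ≠ 0 := sub_ne_zero.mpr (by exact_mod_cast ht.ne')
  have hab : a = -(b * t) := by
    rw [add_mulVec, smul_mulVec, smul_mulVec, one_mulVec, Jmat_mulVec] at h1
    have h0 := congrFun h1 ⟨0, by omega⟩
    simp only [Pi.add_apply, Pi.smul_apply, Pi.one_apply, Pi.zero_apply, Finset.sum_const,
      Finset.card_univ, Fintype.card_fin, smul_eq_mul, nsmul_eq_mul, mul_one] at h0
    linarith
  have htr : (a • 1 + b • Jmat t).trace = a * (t - 1) := by
    simp [trace, Jmat, hab]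
    ring
  rw [htr, mul_div_cancel_right₀ _ ht1, Bmat, smul_sub, smul_smul, hab, sub_eq_add_neg, ← neg_smul]
  congr 2
  field_simp

end CompleteSymmetry

section Kiefer

/-- Kiefer's class of optimality criteria on information matrices: concave, invariant under
relabelling of the treatments, and nondecreasing under scaling. -/
structure IsKieferCriterion {t : ℕ} (Φ : Matrix (Fin t) (Fin t) ℝ → ℝ) : Prop where
  concave : ∀ A B : Matrix (Fin t) (Fin t) ℝ, A.PosSemidef → B.PosSemidef →
    ∀ a b : ℝ, 0 ≤ a → 0 ≤ b → a + b = 1 → a * Φ A + b * Φ B ≤ Φ (a • A + b • B)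
  perm_invariant : ∀ (σ : Equiv.Perm (Fin t)) (C : Matrix (Fin t) (Fin t) ℝ), C.PosSemidef →
    Φ ((Smat σ)ᵀ * C * Smat σ) = Φ C
  smul_mono : ∀ C : Matrix (Fin t) (Fin t) ℝ, C.PosSemidef →
    ∀ b₁ b₂ : ℝ, 0 < b₁ → b₁ ≤ b₂ → Φ (b₁ • C) ≤ Φ (b₂ • C)

variable {t : ℕ} {Φ : Matrix (Fin t) (Fin t) ℝ → ℝ} {C : Matrix (Fin t) (Fin t) ℝ}

theorem Smat_conj (σ : Equiv.Perm (Fin t)) (C : Matrix (Fin t) (Fin t) ℝ) :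
    (Smat σ)ᵀ * C * Smat σ = C.submatrix σ.symm σ.symm := by
  ext i j
  have hσ : ∀ i k : Fin t, i = σ k ↔ k = σ.symm i := fun i k => by
    rw [Equiv.eq_symm_apply, eq_comm]
  simp [Smat, Matrix.mul_apply, hσ]

theorem permAverage_eq_smul_Bmat (ht : 1 < t) (h1 : C *ᵥ 1 = 0) :
    ∑ σ : Equiv.Perm (Fin t), (t.factorial : ℝ)⁻¹ • ((Smat σ)ᵀ * C * Smat σ) =
      (C.trace / (t - 1)) • Bmat t := by
  set M := ∑ σ : Equiv.Perm (Fin t), (t.factorial : ℝ)⁻¹ • ((Smat σ)ᵀ * C * Smat σ) with hM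
  have hinv : ∀ τ : Equiv.Perm (Fin t), M.submatrix τ τ = M := fun τ => by
    ext i j
    simp only [hM, Smat_conj, submatrix_apply, Matrix.sum_apply, Matrix.smul_apply]
    exact Fintype.sum_equiv (Equiv.mulLeft τ⁻¹) _ _ fun _ => rfl
  have hrow : M *ᵥ 1 = 0 := by
    simp only [hM, Smat_conj, sum_mulVec, smul_mulVec]
    refine Finset.sum_eq_zero fun σ _ => ?_
    have : C.submatrix σ.symm σ.symm *ᵥ 1 = (C *ᵥ 1) ∘ σ.symm :=
      submatrix_mulVec_equiv C 1 σ.symm σ.symm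
    rw [this, h1, Pi.zero_comp, smul_zero]
  have htr : M.trace = C.trace := by
    have hσ : ∀ σ : Equiv.Perm (Fin t), (C.submatrix σ.symm σ.symm).trace = C.trace := fun σ =>
      Equiv.sum_comp σ.symm fun i => C i i
    simp [hM, Smat_conj, trace_sum, trace_smul, hσ, Fintype.card_perm, Nat.factorial_ne_zero]
  rw [← htr]
  exact eq_smul_Bmat_of_mulVec_one_eq_zero ht (exists_eq_smul_one_add_of_submatrix_eq hinv) hrow

namespace IsKieferCriterion

theorem concaveOn (hΦ : IsKieferCriterion Φ) :
    ConcaveOn ℝ {A : Matrix (Fin t) (Fin t) ℝ | A.PosSemidef} Φ :=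
  ⟨fun _ hA _ hB _ _ ha hb _ => (hA.smul ha).add (hB.smul hb),
    fun A hA B hB a b ha hb hab => hΦ.concave A B hA hB a b ha hb hab⟩

theorem le_smul_Bmat (hΦ : IsKieferCriterion Φ) (ht : 1 < t) (hC : C.PosSemidef)
    (h1 : C *ᵥ 1 = 0) : Φ C ≤ Φ ((C.trace / (t - 1)) • Bmat t) := by
  have hJensen := hΦ.concaveOn.le_map_sum (t := (Finset.univ : Finset (Equiv.Perm (Fin t))))
    (w := fun _ => (t.factorial : ℝ)⁻¹) (p := fun σ => (Smat σ)ᵀ * C * Smat σ)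
    (fun _ _ => by positivity) (by simp [Fintype.card_perm, Nat.factorial_ne_zero])
    fun σ _ => posSemidef_transpose_mul_mul_same hC (Smat σ)
  rw [permAverage_eq_smul_Bmat ht h1] at hJensen
  simpa [hΦ.perm_invariant _ _ hC, Fintype.card_perm, Nat.factorial_ne_zero] using hJensen

theorem smul_le_smul (hΦ : IsKieferCriterion Φ) (hC : C.PosSemidef) {a b : ℝ} (ha : 0 ≤ a)
    (hab : a ≤ b) : Φ (a • C) ≤ Φ (b • C) := by
  rcases ha.eq_or_lt with rfl | ha
  · rcases hab.eq_or_lt with rfl | hb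
    · exact le_rfl
    -- Monotonicity is only assumed for positive scalars; concavity at the midpoint reaches `0`.
    have hmid := hΦ.concave (0 • C) (b • C) (by simpa using PosSemidef.zero) (hC.smul hab)
      (1 / 2) (1 / 2) (by norm_num) (by norm_num) (by norm_num)
    have hmono := hΦ.smul_mono C hC (1 / 2 * b) b (by positivity) (by linarith)
    simp only [zero_smul, smul_zero, zero_add, smul_smul] at hmid ⊢
    linarith
  · exact hΦ.smul_mono C hC a b ha hab

end IsKieferCriterion

end Kiefer

section InformationMatrices

variable {p t n : ℕ} {S : Matrix (Fin p) (Fin p) ℝ} {w : TrtSeq p t → ℝ}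

/-- The information matrix for the direct effects under the traditional model, computed with the
generalized inverse `G` of `C_{d22}`. Indices are shifted by one: `CD n S w 0 0` is `C_{d11}`. -/
def tradInfo (n : ℕ) (S : Matrix (Fin p) (Fin p) ℝ) (w : TrtSeq p t → ℝ)
    (G : Matrix (Fin t) (Fin t) ℝ) : Matrix (Fin t) (Fin t) ℝ :=
  CD n S w 0 0 - CD n S w 0 1 * G * CD n S w 1 0

/-- Universal optimality of `d` under the traditional model, in Kiefer's sense. -/
def IsUniversallyOptimal (n : ℕ) (S : Matrix (Fin p) (Fin p) ℝ) (w : TrtSeq p t → ℝ) : Prop :=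
  ∀ Φ : Matrix (Fin t) (Fin t) ℝ → ℝ, IsKieferCriterion Φ →
    ∀ w' : TrtSeq p t → ℝ, IsDesign w' →
      ∀ G', IsGInv (CD n S w' 1 1) G' → ∀ G, IsGInv (CD n S w 1 1) G →
        Φ (tradInfo n S w' G') ≤ Φ (tradInfo n S w G)

theorem Btil_posSemidef (hS : S.PosDef) : (Btil S).PosSemidef := by
  have hS' : (S⁻¹).PosSemidef := hS.inv.posSemidef
  have hJ : Jmat p = vecMulVec (fun _ => 1) fun _ => 1 := by
    ext i j
    simp [Jmat, vecMulVec_apply]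
  rw [Btil, hJ, mul_vecMulVec, vecMulVec_mul, ← mulVec_transpose,
    transpose_eq_self_of_posSemidef hS']
  exact posSemidef_sub_inv_smul_vecMulVec_mulVec hS' _

theorem Chat_eq (S : Matrix (Fin p) (Fin p) ℝ) (s : TrtSeq p t) (i j : Fin 2) :
    Chat S s i j = (Gmat i s * Bmat t)ᵀ * Btil S * (Gmat j s * Bmat t) := by
  simp only [Chat, transpose_mul, Bmat_transpose, Matrix.mul_assoc]

theorem Chat_mulVec_one (S : Matrix (Fin p) (Fin p) ℝ) (s : TrtSeq p t) (i j : Fin 2) :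
    Chat S s i j *ᵥ 1 = 0 := by
  rw [Chat, ← mulVec_mulVec, Bmat_mulVec_one, mulVec_zero]

theorem CD_mulVec_one (n : ℕ) (S : Matrix (Fin p) (Fin p) ℝ) (w : TrtSeq p t → ℝ) (i j : Fin 2) :
    CD n S w i j *ᵥ 1 = 0 := by
  have hmean : (∑ s, w s • (Gmat j s * Bmat t)) *ᵥ 1 = 0 := by
    simp only [sum_mulVec, smul_mulVec, ← mulVec_mulVec, Bmat_mulVec_one, mulVec_zero, smul_zero,
      Finset.sum_const_zero]
  rw [CD, ChatD, sub_mulVec, smul_mulVec, smul_mulVec, ← mulVec_mulVec, hmean]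
  simp only [sum_mulVec, smul_mulVec, Chat_mulVec_one, smul_zero, Finset.sum_const_zero,
    mulVec_zero, sub_zero]

theorem tradInfo_mulVec_one (n : ℕ) (S : Matrix (Fin p) (Fin p) ℝ) (w : TrtSeq p t → ℝ)
    (G : Matrix (Fin t) (Fin t) ℝ) : tradInfo n S w G *ᵥ 1 = 0 := by
  rw [tradInfo, sub_mulVec, ← mulVec_mulVec, CD_mulVec_one, CD_mulVec_one, mulVec_zero, sub_zero]

theorem CD_exists_gram (n : ℕ) (hS : S.PosDef) (hw : IsDesign w) :
    ∃ M : Fin 2 → Matrix (TrtSeq p t × Fin p) (Fin t) ℝ, ∀ i j, CD n S w i j = (M i)ᵀ * M j := by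
  obtain ⟨M, hM⟩ := exists_gram_of_posSemidef (c := fun s => n * w s) (Btil_posSemidef hS)
    (fun s => mul_nonneg n.cast_nonneg (hw.1 s))
    fun i s => Gmat i s * Bmat t - ∑ r, w r • (Gmat i r * Bmat t)
  refine ⟨M, fun i j => ?_⟩
  rw [← hM, CD, ChatD, ← smul_sub]
  simp only [Chat_eq, mul_smul, ← Finset.smul_sum]
  rw [sum_smul_transpose_mul_mul_sub_mean (Btil S) hw.2]

theorem tradInfo_posSemidef (hS : S.PosDef) (hw : IsDesign w) {G : Matrix (Fin t) (Fin t) ℝ}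
    (hG : IsGInv (CD n S w 1 1) G) : (tradInfo n S w G).PosSemidef := by
  obtain ⟨M, hM⟩ := CD_exists_gram n hS hw
  simp only [IsGInv, tradInfo, hM] at hG ⊢
  exact posSemidef_ginv_residual hG

theorem cD_eq_sum (n : ℕ) (S : Matrix (Fin p) (Fin p) ℝ) (w : TrtSeq p t → ℝ) (i j : Fin 2) :
    cD n S w i j = n * ∑ s, w s * cseq S s i j := by
  simp only [cD, ChatD, trace_smul, trace_sum, smul_eq_mul, cseq]

theorem cseq_comm (hS : S.PosDef) (s : TrtSeq p t) (i j : Fin 2) :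
    cseq S s i j = cseq S s j i := by
  rw [cseq, ← trace_transpose, cseq, Chat_eq, Chat_eq]
  simp only [transpose_mul, transpose_transpose,
    transpose_eq_self_of_posSemidef (Btil_posSemidef hS), Matrix.mul_assoc]

theorem cD_comm (hS : S.PosDef) (i j : Fin 2) : cD n S w i j = cD n S w j i := by
  simp only [cD_eq_sum, cseq_comm hS _ i j]

theorem cD_self_nonneg (n : ℕ) (hS : S.PosDef) (hw : IsDesign w) (i : Fin 2) :
    0 ≤ cD n S w i i := by
  rw [cD_eq_sum]
  refine mul_nonneg n.cast_nonneg (Finset.sum_nonneg fun s _ => mul_nonneg (hw.1 s) ?_)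
  rw [cseq, Chat_eq]
  exact (posSemidef_transpose_mul_mul_same (Btil_posSemidef hS) _).trace_nonneg

theorem one_lt_of_cD_pos {i j : Fin 2} (h : 0 < cD n S w i j) : 1 < t := by
  by_contra! ht
  simp [cD, ChatD, Chat, Bmat_eq_zero_of_le_one ht] at h

theorem mul_qD (n : ℕ) (S : Matrix (Fin p) (Fin p) ℝ) (w : TrtSeq p t → ℝ) (x : ℝ) :
    n * qD S w x = cD n S w 0 0 + 2 * cD n S w 0 1 * x + cD n S w 1 1 * x ^ 2 := by
  simp only [cD_eq_sum, qD, qSeq, Finset.mul_sum, Finset.sum_mul, ← Finset.sum_add_distrib]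
  exact Finset.sum_congr rfl fun s _ => by ring

theorem mul_qD_eq_add_sq (hc : cD n S w 1 1 ≠ 0) (x : ℝ) :
    n * qD S w x = n * qD S w (xD n S w) + cD n S w 1 1 * (x - xD n S w) ^ 2 := by
  rw [mul_qD, mul_qD, xD]
  field_simp
  ring

theorem mul_qD_xD_le (hc : 0 < cD n S w 1 1) (x : ℝ) :
    n * qD S w (xD n S w) ≤ n * qD S w x := by
  rw [mul_qD_eq_add_sq hc.ne' x]
  exact le_add_of_nonneg_right (by positivity)

theorem trace_tradInfo_le (hS : S.PosDef) (hw : IsDesign w) {G : Matrix (Fin t) (Fin t) ℝ}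
    (hG : IsGInv (CD n S w 1 1) G) (x : ℝ) : (tradInfo n S w G).trace ≤ n * qD S w x := by
  set μ := fun i => ∑ s, w s • (Gmat i s * Bmat t)
  have htrace : ∀ i j, (CD n S w i j).trace = cD n S w i j - n * ((μ i)ᵀ * Btil S * μ j).trace :=
    fun i j => by rw [CD, trace_sub, trace_smul, smul_eq_mul, cD]
  have hbound : (tradInfo n S w G).trace ≤
      (CD n S w 0 0).trace + 2 * (CD n S w 0 1).trace * x + (CD n S w 1 1).trace * x ^ 2 := by
    obtain ⟨M, hM⟩ := CD_exists_gram n hS hw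
    simp only [IsGInv, tradInfo, hM] at hG ⊢
    exact trace_ginv_residual_le_quadratic hG x
  have hmean : 0 ≤ ((μ 0 + x • μ 1)ᵀ * Btil S * (μ 0 + x • μ 1)).trace :=
    (posSemidef_transpose_mul_mul_same (Btil_posSemidef hS) _).trace_nonneg
  rw [trace_transpose_mul_mul_add_smul
    (transpose_eq_self_of_posSemidef (Btil_posSemidef hS))] at hmean
  rw [htrace, htrace, htrace] at hbound
  rw [mul_qD]
  linarith [mul_nonneg (Nat.cast_nonneg (α := ℝ) n) hmean]

end InformationMatrices

section ExtremalForm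

variable {t : ℕ}

theorem dotProduct_smul_Bmat_sub_smul_vecMulVec_mulVec (α β : ℝ) (τ : Fin t → ℝ) {l : Fin t → ℝ}
    (hl : ∑ i, l i = 0) :
    l ⬝ᵥ ((α • Bmat t - β • vecMulVec τ τ) *ᵥ l) = α * (l ⬝ᵥ l) - β * (τ ⬝ᵥ l) ^ 2 := by
  rw [sub_mulVec, smul_mulVec, smul_mulVec, Bmat_mulVec_of_sum_eq_zero hl, vecMulVec_mulVec,
    dotProduct_sub, dotProduct_smul, dotProduct_smul, op_smul_eq_smul, dotProduct_smul,
    dotProduct_comm l τ, smul_eq_mul, smul_eq_mul, smul_eq_mul, sq]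

theorem dotProduct_self_pos {v : Fin t → ℝ} (hv : v ≠ 0) : 0 < v ⬝ᵥ v := by
  simpa only [star_trivial] using dotProduct_star_self_pos_iff.mpr hv

theorem dotProduct_sq_le (u v : Fin t → ℝ) : (u ⬝ᵥ v) ^ 2 ≤ (u ⬝ᵥ u) * (v ⬝ᵥ v) := by
  simpa only [dotProduct, sq] using Finset.sum_mul_sq_le_sq_mul_sq Finset.univ u v

theorem isLeast_quadratic_smul_Bmat_sub (α : ℝ) {β : ℝ} (hβ : 0 ≤ β) {τ : Fin t → ℝ}
    (hτ : ∑ i, τ i = 0) (hτ0 : τ ≠ 0) :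
    IsLeast {v : ℝ | ∃ l : Fin t → ℝ, ∑ i, l i = 0 ∧ l ⬝ᵥ l = 1 ∧
      v = l ⬝ᵥ ((α • Bmat t - β • vecMulVec τ τ) *ᵥ l)} (α - β * (τ ⬝ᵥ τ)) := by
  have hττ : 0 < τ ⬝ᵥ τ := dotProduct_self_pos hτ0
  constructor
  · have hsqrt : (√(τ ⬝ᵥ τ))⁻¹ * (√(τ ⬝ᵥ τ))⁻¹ * (τ ⬝ᵥ τ) = 1 := by
      rw [← mul_inv, Real.mul_self_sqrt hττ.le, inv_mul_cancel₀ hττ.ne']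
    set k := (√(τ ⬝ᵥ τ))⁻¹
    have hsum : ∑ i, (k • τ) i = 0 := by
      simp only [Pi.smul_apply, smul_eq_mul, ← Finset.mul_sum, hτ, mul_zero]
    have hunit : (k • τ) ⬝ᵥ (k • τ) = 1 := by
      rw [smul_dotProduct, dotProduct_smul, smul_eq_mul, smul_eq_mul, ← mul_assoc, hsqrt]
    refine ⟨k • τ, hsum, hunit, ?_⟩
    rw [dotProduct_smul_Bmat_sub_smul_vecMulVec_mulVec α β τ hsum, hunit, dotProduct_smul,
      smul_eq_mul]
    linear_combination β * (τ ⬝ᵥ τ) * hsqrt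
  · rintro _ ⟨l, hl, hl1, rfl⟩
    rw [dotProduct_smul_Bmat_sub_smul_vecMulVec_mulVec α β τ hl, hl1, mul_one]
    have hCS : (τ ⬝ᵥ l) ^ 2 ≤ τ ⬝ᵥ τ := by simpa only [hl1, mul_one] using dotProduct_sq_le τ l
    gcongr

end ExtremalForm

section PseudoSymmetric

variable {p t n : ℕ} {S : Matrix (Fin p) (Fin p) ℝ} {w : TrtSeq p t → ℝ}

namespace IsPseudoSymmetric

theorem sum_smul_Tmat (hw : IsPseudoSymmetric n S w) (k : Fin p) (a : Fin t) :
    ∑ s, w s * (if s k = a then 1 else 0) = 1 / t := by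
  simpa only [mul_ite, mul_one, mul_zero, Finset.sum_filter] using hw.1 k a

theorem sum_smul_Gmat (hw : IsPseudoSymmetric n S w) (i : Fin 2) :
    ∃ c : Fin p → ℝ, ∑ s, w s • Gmat i s = vecMulVec c 1 := by
  refine ⟨fun k => if i = 0 then 1 / t else if (k : ℕ) = 0 then 0 else 1 / t, ?_⟩
  ext k a
  simp only [Matrix.sum_apply, Matrix.smul_apply, smul_eq_mul, vecMulVec_apply, Pi.one_apply,
    mul_one, Gmat]
  split_ifs with hi hk
  · exact hw.sum_smul_Tmat k a
  · simp [Fmat, hk]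
  · simpa only [Fmat, of_apply, hk, if_false] using hw.sum_smul_Tmat _ a

theorem sum_smul_Gmat_mul_Bmat (hw : IsPseudoSymmetric n S w) (i : Fin 2) :
    ∑ s, w s • (Gmat i s * Bmat t) = 0 := by
  obtain ⟨c, hc⟩ := hw.sum_smul_Gmat i
  have hmul : ∑ s, w s • (Gmat i s * Bmat t) = (∑ s, w s • Gmat i s) * Bmat t := by
    simp only [Matrix.sum_mul, Matrix.smul_mul]
  rw [hmul, hc, vecMulVec_mul, ← mulVec_transpose, Bmat_transpose, Bmat_mulVec_one]
  exact Matrix.ext fun _ _ => mul_zero _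

theorem CD_eq (hw : IsPseudoSymmetric n S w) (ht : 1 < t) (i j : Fin 2) :
    CD n S w i j = (cD n S w i j / (t - 1)) • Bmat t := by
  have htrace : (CD n S w i j).trace = cD n S w i j := by
    rw [CD, hw.sum_smul_Gmat_mul_Bmat, transpose_zero, Matrix.zero_mul, Matrix.zero_mul, smul_zero,
      sub_zero, cD]
  rw [← htrace]
  exact eq_smul_Bmat_of_mulVec_one_eq_zero ht (hw.2 i j) (CD_mulVec_one n S w i j)

theorem tradInfo_eq (hw : IsPseudoSymmetric n S w) (hS : S.PosDef) (hc : 0 < cD n S w 1 1)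
    {G : Matrix (Fin t) (Fin t) ℝ} (hG : IsGInv (CD n S w 1 1) G) :
    tradInfo n S w G = (n * qD S w (xD n S w) / (t - 1)) • Bmat t := by
  have ht := one_lt_of_cD_pos hc
  have ht1 : (t : ℝ) - 1 ≠ 0 := sub_ne_zero.mpr (by exact_mod_cast ht.ne')
  have hBGB : Bmat t * G * Bmat t = ((t - 1) / cD n S w 1 1) • Bmat t := by
    rw [IsGInv, hw.CD_eq ht, Matrix.smul_mul, Matrix.smul_mul, Matrix.mul_smul] at hG
    have hk : cD n S w 1 1 / ((t : ℝ) - 1) ≠ 0 := div_ne_zero hc.ne' ht1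
    rw [← inv_div, ← inv_smul_smul₀ hk (Bmat t * G * Bmat t), smul_right_injective _ hk hG]
  rw [tradInfo, hw.CD_eq ht, hw.CD_eq ht, hw.CD_eq ht, cD_comm hS 1 0, Matrix.smul_mul,
    Matrix.smul_mul, Matrix.mul_smul, hBGB, smul_smul, smul_smul, ← sub_smul, mul_qD, xD]
  congr 1
  field_simp
  ring

theorem CD_dotProduct_pos (hw : IsPseudoSymmetric n S w) (hc : 0 < cD n S w 1 1)
    {τ : Fin t → ℝ} (hτ : ∑ i, τ i = 0) (hτ0 : τ ≠ 0) : 0 < τ ⬝ᵥ (CD n S w 1 1 *ᵥ τ) := by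
  have ht := one_lt_of_cD_pos hc
  have ht1 : (0 : ℝ) < t - 1 := sub_pos.mpr (by exact_mod_cast ht)
  have hττ : 0 < τ ⬝ᵥ τ := dotProduct_self_pos hτ0
  rw [hw.CD_eq ht, smul_mulVec, Bmat_mulVec_of_sum_eq_zero hτ, dotProduct_smul, smul_eq_mul]
  positivity

theorem CInfo_eq (hw : IsPseudoSymmetric n S w) (hS : S.PosDef) (hc : 0 < cD n S w 1 1) (l0 : ℝ)
    {τ : Fin t → ℝ} (hτ : ∑ i, τ i = 0) (hτ0 : τ ≠ 0) :
    CInfo n S w τ l0 = (n * qD S w l0 / (t - 1)) • Bmat t -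
      (cD n S w 1 1 * (l0 - xD n S w) ^ 2 / (t - 1) / (τ ⬝ᵥ τ)) • vecMulVec τ τ := by
  have ht := one_lt_of_cD_pos hc
  have ht1 : (t : ℝ) - 1 ≠ 0 := sub_ne_zero.mpr (by exact_mod_cast ht.ne')
  have hττ : τ ⬝ᵥ τ ≠ 0 := (dotProduct_self_pos hτ0).ne'
  have hBτB : Bmat t * vecMulVec τ τ * Bmat t = vecMulVec τ τ := by
    rw [mul_vecMulVec, vecMulVec_mul, ← mulVec_transpose, Bmat_transpose,
      Bmat_mulVec_of_sum_eq_zero hτ]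
  rw [CInfo, hw.CD_eq ht, hw.CD_eq ht, hw.CD_eq ht, hw.CD_eq ht, cD_comm hS 1 0, smul_mulVec,
    Bmat_mulVec_of_sum_eq_zero hτ, dotProduct_smul, smul_eq_mul]
  simp only [smul_smul, ← add_smul, Matrix.smul_mul, Matrix.mul_smul, hBτB]
  congr 2
  · rw [mul_qD]
    field_simp
    ring
  · rw [xD]
    field_simp
    ring

theorem mD_eq (hw : IsPseudoSymmetric n S w) (hS : S.PosDef) (hc : 0 < cD n S w 1 1) (l0 : ℝ)
    {τ : Fin t → ℝ} (hτ : ∑ i, τ i = 0) (hτ0 : τ ≠ 0) :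
    mD n S w l0 τ = n * qD S w (xD n S w) / (t - 1) := by
  have ht1 : (0 : ℝ) < t - 1 := sub_pos.mpr (by exact_mod_cast one_lt_of_cD_pos hc)
  have hττ : 0 < τ ⬝ᵥ τ := dotProduct_self_pos hτ0
  rw [mD, hw.CInfo_eq hS hc l0 hτ hτ0,
    (isLeast_quadratic_smul_Bmat_sub _ (by positivity) hτ hτ0).csInf_eq, mul_qD_eq_add_sq hc.ne' l0]
  field_simp
  ring

variable {g : Measure (Fin t → ℝ)}

theorem mD_ae_eq (hw : IsPseudoSymmetric n S w) (hS : S.PosDef) (hc : 0 < cD n S w 1 1) (l0 : ℝ)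
    (hg : ∀ᵐ τ ∂g, ∑ i, τ i = 0 ∧ τ ≠ 0) :
    mD n S w l0 =ᵐ[g] fun _ => n * qD S w (xD n S w) / (t - 1) := by
  filter_upwards [hg] with τ hτ using hw.mD_eq hS hc l0 hτ.1 hτ.2

theorem eAdmissible [IsProbabilityMeasure g] (hw : IsPseudoSymmetric n S w)
    (hd : IsDesign w) (hS : S.PosDef) (hc : 0 < cD n S w 1 1) (l0 : ℝ)
    (hg : ∀ᵐ τ ∂g, ∑ i, τ i = 0 ∧ τ ≠ 0) :
    EAdmissible n S g l0 w := by
  refine ⟨hd, ?_, (integrable_const _).congr (hw.mD_ae_eq hS hc l0 hg).symm⟩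
  filter_upwards [hg] with τ hτ using hw.CD_dotProduct_pos hc hτ.1 hτ.2

theorem Ecrit_eq [IsProbabilityMeasure g] (hw : IsPseudoSymmetric n S w)
    (hS : S.PosDef) (hc : 0 < cD n S w 1 1) (l0 : ℝ)
    (hg : ∀ᵐ τ ∂g, ∑ i, τ i = 0 ∧ τ ≠ 0) :
    Ecrit n S g l0 w = n * qD S w (xD n S w) / (t - 1) := by
  rw [Ecrit, integral_congr_ae (hw.mD_ae_eq hS hc l0 hg), integral_const, probReal_univ, one_smul]

end IsPseudoSymmetric

end PseudoSymmetric

section Symmetrization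

variable {p t n : ℕ} {S : Matrix (Fin p) (Fin p) ℝ} {w : TrtSeq p t → ℝ}

/-- Relabelling by `σ` as a permutation of the set of treatment sequences. -/
def permSeqEquiv (p : ℕ) {t : ℕ} (σ : Equiv.Perm (Fin t)) : Equiv.Perm (TrtSeq p t) where
  toFun := permSeq σ
  invFun := permSeq σ⁻¹
  left_inv s := by
    ext k
    simp [permSeq]
  right_inv s := by
    ext k
    simp [permSeq]

theorem Gmat_permSeq_submatrix (i : Fin 2) (σ : Equiv.Perm (Fin t)) (s : TrtSeq p t) :
    (Gmat i (permSeq σ s)).submatrix id σ = Gmat i s := by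
  ext k a
  by_cases hi : i = 0 <;> simp [Gmat, hi, Tmat, Fmat, permSeq]

theorem Gmat_permSeq_mul_Bmat_submatrix (i : Fin 2) (σ : Equiv.Perm (Fin t)) (s : TrtSeq p t) :
    (Gmat i (permSeq σ s) * Bmat t).submatrix id σ = Gmat i s * Bmat t := by
  rw [← submatrix_mul_equiv (e₂ := σ), Bmat_submatrix, Gmat_permSeq_submatrix]

theorem Chat_permSeq_submatrix (S : Matrix (Fin p) (Fin p) ℝ) (i j : Fin 2)
    (σ : Equiv.Perm (Fin t)) (s : TrtSeq p t) :
    (Chat S (permSeq σ s) i j).submatrix σ σ = Chat S s i j := by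
  rw [Chat_eq, Chat_eq, ← Gmat_permSeq_mul_Bmat_submatrix i σ s,
    ← Gmat_permSeq_mul_Bmat_submatrix j σ s]
  rfl

theorem cseq_permSeq (S : Matrix (Fin p) (Fin p) ℝ) (i j : Fin 2) (σ : Equiv.Perm (Fin t))
    (s : TrtSeq p t) : cseq S (permSeq σ s) i j = cseq S s i j := by
  rw [cseq, cseq, ← Chat_permSeq_submatrix S i j σ s]
  exact (Equiv.sum_comp σ fun a => Chat S (permSeq σ s) i j a a).symm

theorem qSeq_permSeq (S : Matrix (Fin p) (Fin p) ℝ) (σ : Equiv.Perm (Fin t)) (s : TrtSeq p t)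
    (x : ℝ) : qSeq S (permSeq σ s) x = qSeq S s x := by
  simp only [qSeq, cseq_permSeq]

namespace IsSymmetricDesign

theorem sum_smul_eq_sum_permSeq {M : Type*} [AddCommMonoid M] [Module ℝ M]
    (hw : IsSymmetricDesign w) (f : TrtSeq p t → M) (σ : Equiv.Perm (Fin t)) :
    ∑ s, w s • f s = ∑ s, w s • f (permSeq σ s) := by
  rw [← Equiv.sum_comp (permSeqEquiv p σ)]
  exact Finset.sum_congr rfl fun s _ => congrArg (· • f (permSeq σ s)) (hw σ s)

theorem CD_submatrix (hw : IsSymmetricDesign w) (n : ℕ) (S : Matrix (Fin p) (Fin p) ℝ)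
    (i j : Fin 2) (σ : Equiv.Perm (Fin t)) : (CD n S w i j).submatrix σ σ = CD n S w i j := by
  have hmean : ∀ i, (∑ s, w s • (Gmat i s * Bmat t)).submatrix id σ =
      ∑ s, w s • (Gmat i s * Bmat t) := fun i => by
    conv_lhs => rw [hw.sum_smul_eq_sum_permSeq _ σ]
    ext k a
    simp only [submatrix_apply, Matrix.sum_apply, Matrix.smul_apply]
    refine Finset.sum_congr rfl fun s _ => congrArg (w s • ·) ?_
    exact congrFun (congrFun (Gmat_permSeq_mul_Bmat_submatrix i σ s) k) a
  have hChat : (ChatD n S w i j).submatrix σ σ = ChatD n S w i j := by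
    rw [ChatD]
    conv_lhs => rw [hw.sum_smul_eq_sum_permSeq _ σ]
    ext a b
    simp only [submatrix_apply, Matrix.sum_apply, Matrix.smul_apply]
    refine congrArg (_ • ·) (Finset.sum_congr rfl fun s _ => congrArg (w s • ·) ?_)
    exact congrFun (congrFun (Chat_permSeq_submatrix S i j σ s) a) b
  set μ := fun i => ∑ s, w s • (Gmat i s * Bmat t)
  calc (CD n S w i j).submatrix σ σ
      = (ChatD n S w i j).submatrix σ σ -
          (n : ℝ) • (((μ i).submatrix id σ)ᵀ * Btil S * (μ j).submatrix id σ) := rfl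
    _ = CD n S w i j := by rw [hChat, hmean, hmean, CD]

theorem sum_filter_eq (hw : IsSymmetricDesign w) (hw1 : ∑ s, w s = 1) (k : Fin p) (i : Fin t) :
    ∑ s with s k = i, w s = 1 / t := by
  have hconst : ∀ j, ∑ s with s k = j, w s = ∑ s with s k = i, w s := fun j => by
    rw [Finset.sum_filter, Finset.sum_filter, ← Equiv.sum_comp (permSeqEquiv p (Equiv.swap i j))]
    refine Finset.sum_congr rfl fun s _ => ?_
    change (if Equiv.swap i j (s k) = j then w (permSeq (Equiv.swap i j) s) else 0) = _
    simp only [hw _ s, Equiv.swap_apply_eq_iff, Equiv.swap_apply_right]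
  have htotal : ∑ j, ∑ s with s k = j, w s = 1 := by
    rw [← hw1]
    exact Finset.sum_fiberwise _ _ _
  have ht : (t : ℝ) ≠ 0 := by exact_mod_cast i.pos.ne'
  simp only [hconst, Finset.sum_const, Finset.card_univ, Fintype.card_fin, nsmul_eq_mul] at htotal
  rw [eq_div_iff ht, mul_comm, htotal]

theorem isPseudoSymmetric (hw : IsSymmetricDesign w) (hw1 : ∑ s, w s = 1) (n : ℕ)
    (S : Matrix (Fin p) (Fin p) ℝ) : IsPseudoSymmetric n S w :=
  ⟨hw.sum_filter_eq hw1, fun i j =>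
    exists_eq_smul_one_add_of_submatrix_eq (hw.CD_submatrix n S i j)⟩

end IsSymmetricDesign

theorem symmetrize_isSymmetricDesign (w : TrtSeq p t → ℝ) : IsSymmetricDesign (symmetrize w) := by
  intro τ s
  refine congrArg (_ * ·) (Fintype.sum_equiv (Equiv.mulLeft τ⁻¹) _ _ fun σ => ?_)
  exact congrArg w (funext fun k => by simp [permSeq])

theorem sum_symmetrize_mul (w : TrtSeq p t → ℝ) {f : TrtSeq p t → ℝ}
    (hf : ∀ (σ : Equiv.Perm (Fin t)) s, f (permSeq σ s) = f s) :
    ∑ s, symmetrize w s * f s = ∑ s, w s * f s := by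
  have hσ : ∀ σ : Equiv.Perm (Fin t), ∑ s, permDesign σ w s * f s = ∑ s, w s * f s := fun σ =>
    Fintype.sum_equiv (permSeqEquiv p σ⁻¹) _ _ fun s => by
      rw [← hf σ⁻¹ s]
      rfl
  simp only [symmetrize, mul_assoc, Finset.sum_mul]
  rw [← Finset.mul_sum, Finset.sum_comm]
  simp [hσ, Fintype.card_perm, Nat.factorial_ne_zero]

theorem IsDesign.symmetrize (hw : IsDesign w) : IsDesign (symmetrize w) := by
  refine ⟨fun s => mul_nonneg (by positivity) (Finset.sum_nonneg fun σ _ => hw.1 _), ?_⟩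
  simpa [hw.2] using sum_symmetrize_mul w (f := fun _ => 1) fun _ _ => rfl

theorem cD_symmetrize (n : ℕ) (S : Matrix (Fin p) (Fin p) ℝ) (w : TrtSeq p t → ℝ) (i j : Fin 2) :
    cD n S (symmetrize w) i j = cD n S w i j := by
  rw [cD_eq_sum, cD_eq_sum, sum_symmetrize_mul w (cseq_permSeq S i j)]

theorem qD_symmetrize (S : Matrix (Fin p) (Fin p) ℝ) (w : TrtSeq p t → ℝ) (x : ℝ) :
    qD S (symmetrize w) x = qD S w x :=
  sum_symmetrize_mul w fun σ s => qSeq_permSeq S σ s x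

end Symmetrization

section Optimality

variable {p t n : ℕ} {S : Matrix (Fin p) (Fin p) ℝ} {w w' : TrtSeq p t → ℝ}

theorem IsDesign.midpoint (hw : IsDesign w) (hw' : IsDesign w') :
    IsDesign fun s => (w s + w' s) / 2 := by
  refine ⟨fun s => div_nonneg (add_nonneg (hw.1 s) (hw'.1 s)) zero_le_two, ?_⟩
  rw [← Finset.sum_div, Finset.sum_add_distrib, hw.2, hw'.2]
  norm_num

theorem sum_midpoint_mul {ι : Type*} [Fintype ι] (w w' f : ι → ℝ) :
    ∑ s, (w s + w' s) / 2 * f s = (∑ s, w s * f s + ∑ s, w' s * f s) / 2 := by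
  rw [← Finset.sum_add_distrib, Finset.sum_div]
  exact Finset.sum_congr rfl fun s _ => by ring

theorem EOptimal.mul_qD_xD_le_of_isPseudoSymmetric {u : TrtSeq p t → ℝ} {l0 : ℝ}
    {g : Measure (Fin t → ℝ)} [IsProbabilityMeasure g]
    (hopt : EOptimal n S g l0 w) (hS : S.PosDef) (hg : ∀ᵐ τ ∂g, ∑ i, τ i = 0 ∧ τ ≠ 0)
    (hps : IsPseudoSymmetric n S w) (hc : 0 < cD n S w 1 1)
    (hud : IsDesign u) (hu : IsPseudoSymmetric n S u) (huc : 0 < cD n S u 1 1) :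
    n * qD S u (xD n S u) ≤ n * qD S w (xD n S w) := by
  have ht1 : (0 : ℝ) < t - 1 := sub_pos.mpr (by exact_mod_cast one_lt_of_cD_pos hc)
  have h := hopt u (hu.eAdmissible hud hS huc l0 hg)
  rwa [hu.Ecrit_eq hS huc l0 hg, hps.Ecrit_eq hS hc l0 hg, div_le_div_iff_of_pos_right ht1] at h

theorem exists_mul_qD_le (hS : S.PosDef) (hw : IsDesign w) (hc : 0 < cD n S w 1 1)
    (hmax : ∀ u : TrtSeq p t → ℝ, IsDesign u → IsPseudoSymmetric n S u → 0 < cD n S u 1 1 →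
      n * qD S u (xD n S u) ≤ n * qD S w (xD n S w)) (hw' : IsDesign w') :
    ∃ x, n * qD S w' x ≤ n * qD S w (xD n S w) := by
  set v := fun s => (w s + w' s) / 2 with hv
  have hvd : IsDesign v := hw.midpoint hw'
  have hvc : 0 < cD n S (symmetrize v) 1 1 := by
    have h := cD_self_nonneg n hS hw' 1
    rw [cD_symmetrize, cD_eq_sum, hv, sum_midpoint_mul, mul_div_assoc', mul_add, ← cD_eq_sum,
      ← cD_eq_sum]
    positivity
  set x := xD n S (symmetrize v)
  have hvx : n * qD S (symmetrize v) x ≤ n * qD S w (xD n S w) :=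
    hmax _ hvd.symmetrize
      ((symmetrize_isSymmetricDesign v).isPseudoSymmetric hvd.symmetrize.2 n S) hvc
  have hwx : n * qD S w (xD n S w) ≤ n * qD S w x := mul_qD_xD_le hc x
  rw [qD_symmetrize, qD, hv, sum_midpoint_mul, ← qD, ← qD] at hvx
  exact ⟨x, by linarith⟩

theorem stmt19_general (hS : S.PosDef) {l0 : ℝ} {g : Measure (Fin t → ℝ)}
    [IsProbabilityMeasure g] (hg : ∀ᵐ τ ∂g, ∑ i, τ i = 0 ∧ τ ≠ 0)
    (hw : IsDesign w) (hps : IsPseudoSymmetric n S w)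
    (hc22 : 0 < cD n S w 1 1) (hopt : EOptimal n S g l0 w) : IsUniversallyOptimal n S w := by
  intro Φ hΦ w' hw' G' hG' G hG
  have ht : 1 < t := one_lt_of_cD_pos hc22
  have ht1 : (0 : ℝ) < t - 1 := sub_pos.mpr (by exact_mod_cast ht)
  obtain ⟨x, hx⟩ := exists_mul_qD_le hS hw hc22 (fun u hud hu huc =>
    hopt.mul_qD_xD_le_of_isPseudoSymmetric hS hg hps hc22 hud hu huc) hw'
  have hpsd : (tradInfo n S w' G').PosSemidef := tradInfo_posSemidef hS hw' hG'
  have htrace : (tradInfo n S w' G').trace ≤ n * qD S w (xD n S w) :=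
    (trace_tradInfo_le hS hw' hG' x).trans hx
  calc Φ (tradInfo n S w' G')
      ≤ Φ (((tradInfo n S w' G').trace / (t - 1)) • Bmat t) :=
        hΦ.le_smul_Bmat ht hpsd (tradInfo_mulVec_one n S w' G')
    _ ≤ Φ ((n * qD S w (xD n S w) / (t - 1)) • Bmat t) :=
        hΦ.smul_le_smul (Bmat_posSemidef t) (div_nonneg hpsd.trace_nonneg ht1.le) (by gcongr)
    _ = Φ (tradInfo n S w G) := by rw [hps.tradInfo_eq hS hc22 hG]

end Optimality


/-- a pseudo symmetric `E_{g,λ0}`-optimal design for the proportional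
model is universally optimal under the traditional linear crossover model. -/
theorem stmt19 (p t n : ℕ) (hp : 2 ≤ p) (ht : 3 ≤ t) (hn : 1 ≤ n)
    (S : Matrix (Fin p) (Fin p) ℝ) (hS : S.PosDef)
    (l0 : ℝ) (g : Measure (Fin t → ℝ)) (hg : IsExchangeablePrior g)
    (w : TrtSeq p t → ℝ) (hw : IsDesign w) (hps : IsPseudoSymmetric n S w)
    (hc22 : 0 < cD n S w 1 1) (hopt : EOptimal n S g l0 w) :
    ∀ Phi : Matrix (Fin t) (Fin t) ℝ → ℝ,
      (∀ A B : Matrix (Fin t) (Fin t) ℝ, A.PosSemidef → B.PosSemidef →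
        ∀ a b : ℝ, 0 ≤ a → 0 ≤ b → a + b = 1 →
          a * Phi A + b * Phi B ≤ Phi (a • A + b • B)) →
      (∀ (σ : Equiv.Perm (Fin t)) (C : Matrix (Fin t) (Fin t) ℝ), C.PosSemidef →
        Phi ((Smat σ)ᵀ * C * Smat σ) = Phi C) →
      (∀ C : Matrix (Fin t) (Fin t) ℝ, C.PosSemidef →
        ∀ b1 b2 : ℝ, 0 < b1 → b1 ≤ b2 → Phi (b1 • C) ≤ Phi (b2 • C)) →
      ∀ w' : TrtSeq p t → ℝ, IsDesign w' →
        ∀ G' : Matrix (Fin t) (Fin t) ℝ, IsGInv (CD n S w' 1 1) G' →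
        ∀ G : Matrix (Fin t) (Fin t) ℝ, IsGInv (CD n S w 1 1) G →
        Phi (CD n S w' 0 0 - CD n S w' 0 1 * G' * CD n S w' 1 0) ≤
          Phi (CD n S w 0 0 - CD n S w 0 1 * G * CD n S w 1 0) := by
  have := hg.1
  exact fun Phi hconc hperm hmono =>
    stmt19_general hS (ae_iff.mpr hg.2.1) hw hps hc22 hopt Phi ⟨hconc, hperm, hmono⟩
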